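/- Let p ∈ (1,∞), γ > 0, and let Y be a real Banach space with property (β_p) with constant γ. Then for every integer h ≥ 2, c_Y(T^ω_h) ≥ 2·γ^{1/p}·(log₂(h/2))^{1/p}. -/

import Mathlib

open Set Function Filter

open scoped ENNReal

attribute [local instance] Classical.propDecidable

noncomputable section

def LipUB {α β : Type*} (dα : α → α → ℝ) (dβ : β → β → ℝ) (f : α → β) (L : ℝ) : Prop :=
  ∀ a b : α, dβ (f a) (f b) ≤ L * dα a b

def CoLipUB {α β : Type*} (dα : α → α → ℝ) (dβ : β → β → ℝ) (f : α → β) (C : ℝ) : Prop :=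
  ∀ a b : α, dα a b ≤ C * dβ (f a) (f b)

def IsBiLipEmb {α β : Type*} (dα : α → α → ℝ) (dβ : β → β → ℝ) (f : α → β) : Prop :=
  Function.Injective f ∧ ∃ L C : ℝ, LipUB dα dβ f L ∧ CoLipUB dα dβ f C

def distortionSet (α β : Type*) (dα : α → α → ℝ) (dβ : β → β → ℝ) : Set ℝ :=
  {D | ∃ f : α → β, Function.Injective f ∧ ∃ L C : ℝ,
    LipUB dα dβ f L ∧ CoLipUB dα dβ f C ∧ D = L * C}

def cDist (α β : Type*) (dα : α → α → ℝ) (dβ : β → β → ℝ) : ℝ≥0∞ :=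
  ⨅ D ∈ distortionSet α β dα dβ, ENNReal.ofReal D
def rolewiczSet (Y : Type*) [SeminormedAddCommGroup Y] (t : ℝ) : Set ℝ :=
  {s | ∃ x : Y, ‖x‖ ≤ 1 ∧ ∃ y : ℕ → Y, (∀ i, ‖y i‖ ≤ 1) ∧
    (∀ n m : ℕ, n ≠ m → t ≤ ‖y n - y m‖) ∧ s = ⨅ i, ‖x - y i‖ / 2}

def rolewiczMod (Y : Type*) [SeminormedAddCommGroup Y] (t : ℝ) : ℝ :=
  1 - sSup (rolewiczSet Y t)

def HasBeta (Y : Type*) [SeminormedAddCommGroup Y] : Prop :=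
  ∀ t : ℝ, 0 < t → t ≤ 2 → 0 < rolewiczMod Y t

def HasBetaP (Y : Type*) [SeminormedAddCommGroup Y] (p γ : ℝ) : Prop :=
  ∀ t : ℝ, 0 < t → t ≤ 2 → (rolewiczSet Y t).Nonempty → γ * t ^ p ≤ rolewiczMod Y t
def lcpLen : List ℕ → List ℕ → ℕ
  | a :: x, b :: y => if a = b then lcpLen x y + 1 else 0
  | _, _ => 0

def treeDist (x y : List ℕ) : ℝ :=
  (x.length : ℝ) + (y.length : ℝ) - 2 * (lcpLen x y : ℝ)

def TreeOmega (h : ℕ) : Type := {x : List ℕ // x.length ≤ h}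

def tDist (h : ℕ) : TreeOmega h → TreeOmega h → ℝ := fun x y => treeDist x.1 y.1

/-!
A fork argument. Let `f` embed the tree with Lipschitz constant `A` and co-Lipschitz constant `C`.
Suppose every vertex has, below each of its children, a descendant `n` levels down whose image is
at distance at most `n * L`. Going down `n` levels to `z` and then `n` further levels through each
child of `z` produces infinitely many descendants whose images lie in the ball of radius `n * L`
around `f z`, as does the image of the starting vertex, and are `2 * n / C`-separated.
Property (β_p) makes one of them closer to the start than the triangle inequality predicts: at the
scale `2 * n` the constant `L` improves to `L * (1 - γ * (2 / (C * L)) ^ p)`, up to an arbitrarily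
small loss. Since `(1 - s) ^ p ≤ 1 - s` on `[0, 1]`, the quantity `(C * L) ^ p` drops by almost
`γ * 2 ^ p` at every doubling. It equals `(C * A) ^ p` at scale `1` and never falls below `1`, which
bounds the number of doublings.
-/

theorem lcpLen_append_append (u x y : List ℕ) :
    lcpLen (u ++ x) (u ++ y) = u.length + lcpLen x y := by
  induction u with
  | nil => simp only [List.nil_append, List.length_nil, zero_add]
  | cons a u ih =>
    simp only [List.cons_append, lcpLen, if_true, ih, List.length_cons]
    ring

theorem treeDist_append_append (u x y : List ℕ) : treeDist (u ++ x) (u ++ y) = treeDist x y := by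
  simp only [treeDist, lcpLen_append_append, List.length_append]
  push_cast
  ring

theorem treeDist_of_prefix {u v : List ℕ} (huv : u <+: v) :
    treeDist u v = v.length - u.length := by
  obtain ⟨w, rfl⟩ := huv
  simpa [treeDist, lcpLen] using treeDist_append_append u [] w

theorem treeDist_of_concat_prefix {z x y : List ℕ} {i j : ℕ} (hij : i ≠ j)
    (hx : z ++ [i] <+: x) (hy : z ++ [j] <+: y) :
    treeDist x y = x.length + y.length - 2 * z.length := by
  obtain ⟨x, rfl⟩ := hx
  obtain ⟨y, rfl⟩ := hy
  simp only [List.append_assoc, treeDist_append_append]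
  simp only [treeDist, List.singleton_append, lcpLen, if_neg hij, List.length_append,
    List.length_cons]
  push_cast
  ring

section Rolewicz

variable {Y : Type*} [SeminormedAddCommGroup Y] {x : Y} {y : ℕ → Y} {p γ s t R : ℝ}

theorem bddBelow_range_norm_sub_div_two (x : Y) (y : ℕ → Y) :
    BddBelow (range fun i => ‖x - y i‖ / 2) :=
  ⟨0, forall_mem_range.2 fun _ => by positivity⟩

theorem bddAbove_rolewiczSet (Y : Type*) [SeminormedAddCommGroup Y] (t : ℝ) :
    BddAbove (rolewiczSet Y t) := by
  refine ⟨1, ?_⟩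
  rintro _ ⟨x, hx, y, hy, -, rfl⟩
  calc ⨅ i, ‖x - y i‖ / 2 ≤ ‖x - y 0‖ / 2 := ciInf_le (bddBelow_range_norm_sub_div_two x y) 0
    _ ≤ 1 := by linarith [norm_sub_le x (y 0), hy 0]

theorem HasBetaP.iInf_norm_sub_div_two_le (hY : HasBetaP Y p γ) (ht₀ : 0 < t) (ht₂ : t ≤ 2)
    (hx : ‖x‖ ≤ 1) (hy : ∀ i, ‖y i‖ ≤ 1) (hsep : ∀ i j, i ≠ j → t ≤ ‖y i - y j‖) :
    ⨅ i, ‖x - y i‖ / 2 ≤ 1 - γ * t ^ p := by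
  have hmem : ⨅ i, ‖x - y i‖ / 2 ∈ rolewiczSet Y t := ⟨x, hx, y, hy, hsep, rfl⟩
  have hsup := le_csSup (bddAbove_rolewiczSet Y t) hmem
  have hmod : γ * t ^ p ≤ 1 - sSup (rolewiczSet Y t) := hY t ht₀ ht₂ ⟨_, hmem⟩
  linarith

theorem HasBetaP.exists_dist_lt [NormedSpace ℝ Y] (hY : HasBetaP Y p γ) (ht₀ : 0 < t)
    (ht₂ : t ≤ 2) (hs : s < γ * t ^ p) (hR : 0 < R) (z : Y) (hx : dist x z ≤ R)
    (hy : ∀ i, dist (y i) z ≤ R) (hsep : ∀ i j, i ≠ j → t * R ≤ dist (y i) (y j)) :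
    ∃ i, dist x (y i) < 2 * R * (1 - s) := by
  let T : Y → Y := fun v => R⁻¹ • (v - z)
  have norm_T_sub (v w : Y) : ‖T v - T w‖ = dist v w / R := by
    rw [← smul_sub, sub_sub_sub_cancel_right, norm_smul, norm_inv, Real.norm_of_nonneg hR.le,
      ← dist_eq_norm, inv_mul_eq_div]
  have norm_T_le {v : Y} (hv : dist v z ≤ R) : ‖T v‖ ≤ 1 := by
    simpa only [T, sub_self, smul_zero, sub_zero] using
      (norm_T_sub v z).trans_le ((div_le_one hR).2 hv)
  have hinf : ⨅ i, ‖T x - T (y i)‖ / 2 < 1 - s := by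
    refine (hY.iInf_norm_sub_div_two_le ht₀ ht₂ (norm_T_le hx) (fun i => norm_T_le (hy i))
      fun i j hij => ?_).trans_lt (by linarith)
    exact ((le_div_iff₀ hR).2 (hsep i j hij)).trans_eq (norm_T_sub _ _).symm
  obtain ⟨i, hi⟩ := exists_lt_of_ciInf_lt hinf
  rw [norm_T_sub, div_div, div_lt_iff₀ (by positivity)] at hi
  exact ⟨i, by linarith⟩

end Rolewicz

theorem logb_two_natCast_div_two_le (h : ℕ) : Real.logb 2 ((h : ℝ) / 2) ≤ Nat.log 2 h := by
  rcases h.eq_zero_or_pos with rfl | hh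
  · simp
  · have hlt := Nat.lt_floor_add_one (Real.logb (2 : ℕ) h)
    rw [Real.natFloor_logb_natCast] at hlt
    rw [Real.logb_div (by positivity) two_ne_zero, Real.logb_self_eq_one one_lt_two]
    exact_mod_cast (sub_lt_iff_lt_add.2 hlt).le

theorem mul_one_sub_div_rpow_le {p c x : ℝ} (hp : 1 ≤ p) (hx : 0 < x) (hc : 0 ≤ c)
    (hcx : c ≤ x ^ p) : (x * (1 - c / x ^ p)) ^ p ≤ x ^ p - c := by
  have hxp : 0 < x ^ p := Real.rpow_pos_of_pos hx p
  have hle : 0 ≤ 1 - c / x ^ p := sub_nonneg.2 ((div_le_one hxp).2 hcx)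
  calc (x * (1 - c / x ^ p)) ^ p = x ^ p * (1 - c / x ^ p) ^ p := Real.mul_rpow hx.le hle
    _ ≤ x ^ p * (1 - c / x ^ p) := by
      gcongr
      exact Real.rpow_le_self_of_le_one hle (sub_le_self _ (by positivity)) hp
    _ = x ^ p - c := by field_simp

section ShortDescents

variable {h n : ℕ} {A C L : ℝ}

/-- Below each child of each vertex there is a descendant of that vertex, `n` levels down, at which
`f` stretches the distance `n` from the vertex by at most `L`; only vertices `u` with `n` levels of
the tree below them are considered. The fork argument decreases `L` each time `n` doubles. -/
def HasShortDescents {Y : Type*} [PseudoMetricSpace Y] (f : TreeOmega h → Y) (n : ℕ) (L : ℝ) :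
    Prop :=
  ∀ (u : TreeOmega h) (a : ℕ), u.1.length + n ≤ h →
    ∃ v : TreeOmega h, u.1 ++ [a] <+: v.1 ∧ v.1.length = u.1.length + n ∧ dist (f u) (f v) ≤ n * L

section PseudoMetricSpace

variable {Y : Type*} [PseudoMetricSpace Y] {f : TreeOmega h → Y}

theorem LipUB.hasShortDescents_one (hA : LipUB (tDist h) dist f A) : HasShortDescents f 1 A := by
  intro u a hu
  refine ⟨⟨u.1 ++ [a], by simpa using hu⟩, List.prefix_rfl, by simp, ?_⟩
  simpa [tDist, treeDist_of_prefix, mul_comm] using hA u ⟨u.1 ++ [a], by simpa using hu⟩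

theorem CoLipUB.pos_of_tree (hC : CoLipUB (tDist h) dist f C) (hh : 0 < h) : 0 < C := by
  have hdist : 1 ≤ C * dist (f ⟨[], h.zero_le⟩) (f ⟨[0], hh⟩) := by
    simpa [tDist, treeDist_of_prefix List.nil_prefix] using hC ⟨[], h.zero_le⟩ ⟨[0], hh⟩
  exact pos_of_mul_pos_left (one_pos.trans_le hdist) dist_nonneg

theorem HasShortDescents.one_le_mul (hf : HasShortDescents f n L)
    (hC : CoLipUB (tDist h) dist f C) (hn : 0 < n) (hnh : n ≤ h) : 1 ≤ C * L := by
  obtain ⟨v, -, hv, hdist⟩ := hf ⟨[], h.zero_le⟩ 0 (by simpa using hnh)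
  have hn' : (0 : ℝ) < n := by exact_mod_cast hn
  refine le_of_mul_le_mul_left ?_ hn'
  calc (n : ℝ) * 1 = tDist h ⟨[], h.zero_le⟩ v := by
        simp [tDist, treeDist_of_prefix List.nil_prefix, hv]
    _ ≤ C * dist (f ⟨[], h.zero_le⟩) (f v) := hC _ _
    _ ≤ C * (n * L) := mul_le_mul_of_nonneg_left hdist (hC.pos_of_tree (hn.trans_le hnh)).le
    _ = n * (C * L) := by ring

end PseudoMetricSpace

variable {Y : Type*} [SeminormedAddCommGroup Y] [NormedSpace ℝ Y] {f : TreeOmega h → Y}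
  {p γ c s : ℝ}

theorem HasShortDescents.two_mul (hf : HasShortDescents f n L) (hY : HasBetaP Y p γ)
    (hC : CoLipUB (tDist h) dist f C) (hn : 0 < n) (hs : s < γ * (2 / (C * L)) ^ p) :
    HasShortDescents f (2 * n) (L * (1 - s)) := by
  intro u a hu
  obtain ⟨z, haz, hz, huz⟩ := hf u a (by omega)
  choose v hzv hv hdist using fun i => hf z i (by omega)
  have hC₀ : 0 < C := hC.pos_of_tree (by omega)
  have hCL : 1 ≤ C * L := hf.one_le_mul hC hn (by omega)
  have hL : 0 < L := pos_of_mul_pos_right (one_pos.trans_le hCL) hC₀.le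
  have hsep (i j : ℕ) (hij : i ≠ j) : 2 / (C * L) * (n * L) ≤ dist (f (v i)) (f (v j)) := by
    have htree : tDist h (v i) (v j) = 2 * n := by
      rw [tDist, treeDist_of_concat_prefix hij (hzv i) (hzv j), hv, hv]
      push_cast
      ring
    calc 2 / (C * L) * (n * L) = 2 * n / C := by field_simp
      _ ≤ dist (f (v i)) (f (v j)) := by
        rw [div_le_iff₀' hC₀, ← htree]
        exact hC _ _
  obtain ⟨i, hi⟩ := hY.exists_dist_lt (by positivity) (div_le_self zero_le_two hCL) hs
    (by positivity) (f z) huz (fun i => (dist_comm _ _).trans_le (hdist i)) hsep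
  refine ⟨v i, haz.trans ((List.prefix_append _ _).trans (hzv i)), by rw [hv, hz]; ring,
    hi.le.trans_eq ?_⟩
  push_cast
  ring

theorem HasShortDescents.exists_two_mul (hf : HasShortDescents f n L) (hp : 1 ≤ p)
    (hY : HasBetaP Y p γ) (hC : CoLipUB (tDist h) dist f C) (hn : 0 < n) (hnh : 2 * n ≤ h)
    (hc₀ : 0 ≤ c) (hc : c < γ * 2 ^ p) :
    ∃ L', (C * L') ^ p ≤ (C * L) ^ p - c ∧ HasShortDescents f (2 * n) L' := by
  have hCL : 0 < C * L := one_pos.trans_le (hf.one_le_mul hC hn (by omega))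
  have hCLp : 0 < (C * L) ^ p := Real.rpow_pos_of_pos hCL p
  have hs : c / (C * L) ^ p < γ * (2 / (C * L)) ^ p := by
    rw [Real.div_rpow zero_le_two hCL.le, ← mul_div_assoc]
    gcongr
  have hf' := hf.two_mul hY hC hn hs
  have hpos : 0 < C * L * (1 - c / (C * L) ^ p) := by
    rw [mul_assoc]
    exact one_pos.trans_le (hf'.one_le_mul hC (by omega) hnh)
  have hcL : c ≤ (C * L) ^ p :=
    (div_le_one hCLp).1 (sub_nonneg.1 (pos_of_mul_pos_right hpos hCL.le).le)
  refine ⟨_, ?_, hf'⟩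
  rw [← mul_assoc]
  exact mul_one_sub_div_rpow_le hp hCL hc₀ hcL

theorem exists_hasShortDescents_two_pow (hp : 1 ≤ p) (hY : HasBetaP Y p γ)
    (hA : LipUB (tDist h) dist f A) (hC : CoLipUB (tDist h) dist f C) (hc₀ : 0 ≤ c)
    (hc : c < γ * 2 ^ p) (k : ℕ) (hk : 2 ^ k ≤ h) :
    ∃ L, (C * L) ^ p ≤ (C * A) ^ p - k * c ∧ HasShortDescents f (2 ^ k) L := by
  induction k with
  | zero => exact ⟨A, by simp, by simpa using hA.hasShortDescents_one⟩
  | succ k ih =>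
    rw [pow_succ'] at hk ⊢
    obtain ⟨L, hL, hf⟩ := ih (by omega)
    obtain ⟨L', hL', hf'⟩ := hf.exists_two_mul hp hY hC (by positivity) hk hc₀ hc
    refine ⟨L', hL'.trans ?_, hf'⟩
    push_cast
    linarith

theorem one_add_natLog_mul_le_rpow (hp : 1 ≤ p) (hγ : 0 < γ) (hY : HasBetaP Y p γ) (hh : 0 < h)
    (hA : LipUB (tDist h) dist f A) (hC : CoLipUB (tDist h) dist f C) :
    1 + Nat.log 2 h * (γ * 2 ^ p) ≤ (C * A) ^ p := by
  have hlog : 2 ^ Nat.log 2 h ≤ h := Nat.pow_log_le_self 2 hh.ne'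
  have hlt (c : ℝ) (hc : c ∈ Ioo 0 (γ * 2 ^ p)) : 1 + Nat.log 2 h * c ≤ (C * A) ^ p := by
    obtain ⟨L, hL, hf⟩ := exists_hasShortDescents_two_pow hp hY hA hC hc.1.le hc.2 _ hlog
    have hCL : 1 ≤ (C * L) ^ p :=
      Real.one_le_rpow (hf.one_le_mul hC (by positivity) hlog) (by linarith)
    linarith
  have hcont : Continuous fun c : ℝ => 1 + Nat.log 2 h * c := by fun_prop
  exact le_of_tendsto (hcont.continuousWithinAt (s := Iio (γ * 2 ^ p)))
    (eventually_of_mem (Ioo_mem_nhdsLT (by positivity)) hlt)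

end ShortDescents

theorem tree_distortion_lower_bound_general
    (Y : Type*) [SeminormedAddCommGroup Y] [NormedSpace ℝ Y]
    (p γ : ℝ) (hp : 1 ≤ p) (hγ : 0 < γ) (hY : HasBetaP Y p γ)
    (h : ℕ) (hh : 2 ≤ h) :
    ENNReal.ofReal (2 * γ ^ (1 / p) * Real.logb 2 ((h : ℝ) / 2) ^ (1 / p)) ≤
      cDist (TreeOmega h) Y (tDist h) (fun a b : Y => dist a b) := by
  refine le_iInf₂ ?_
  rintro _ ⟨f, -, A, C, hA, hC, rfl⟩
  refine ENNReal.ofReal_le_ofReal ?_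
  have hp₀ : 0 < p := one_pos.trans_le hp
  have hlog : 0 ≤ Real.logb 2 ((h : ℝ) / 2) :=
    Real.logb_nonneg one_lt_two ((one_le_div two_pos).2 (by exact_mod_cast hh))
  have hCA : 1 ≤ C * A := hA.hasShortDescents_one.one_le_mul hC one_pos (by omega)
  rw [mul_comm A, ← Real.rpow_le_rpow_iff (by positivity) (by positivity) hp₀]
  calc (2 * γ ^ (1 / p) * Real.logb 2 ((h : ℝ) / 2) ^ (1 / p)) ^ p
      = Real.logb 2 ((h : ℝ) / 2) * (γ * 2 ^ p) := by
        rw [one_div, Real.mul_rpow (by positivity) (by positivity),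
          Real.mul_rpow zero_le_two (by positivity),
          Real.rpow_inv_rpow hγ.le hp₀.ne', Real.rpow_inv_rpow hlog hp₀.ne']
        ring
    _ ≤ Nat.log 2 h * (γ * 2 ^ p) := by
        gcongr
        exact logb_two_natCast_div_two_le h
    _ ≤ (C * A) ^ p := by
        linarith [one_add_natLog_mul_le_rpow hp hγ hY (by omega) hA hC]

/-- Theorem 2.5, second part: if `Y` has property (β_p) with
constant `γ` then `c_Y(T^ω_h) ≥ 2 γ^{1/p} (log₂(h/2))^{1/p}` for all `h ≥ 2`. -/
theorem tree_distortion_lower_bound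
    (Y : Type*) [NormedAddCommGroup Y] [NormedSpace ℝ Y] [CompleteSpace Y]
    (p γ : ℝ) (hp : 1 < p) (hγ : 0 < γ) (hY : HasBetaP Y p γ)
    (h : ℕ) (hh : 2 ≤ h) :
    ENNReal.ofReal (2 * γ ^ (1 / p) * Real.logb 2 ((h : ℝ) / 2) ^ (1 / p)) ≤
      cDist (TreeOmega h) Y (tDist h) (fun a b : Y => dist a b) := by
  exact tree_distortion_lower_bound_general Y p γ hp.le hγ hY h hh

end
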